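/- Let S = ⟨m, am+1, bm+t⟩ be a MANS-semigroup with embedding dimension 3, where m ≥ 3, a ≥ 1, t ∈ {2, …, m−1}, and (t−1)(am+1) < bm+t < t(am+1). Then the type of S satisfies t(S) = 1 if and only if t divides m. -/

import Mathlib

/-- `S ⊆ ℕ` is a numerical semigroup: contains `0`, closed under addition,
and has finite complement in `ℕ`. -/
def IsNumSgp (S : Set ℕ) : Prop :=
  0 ∈ S ∧ (∀ a ∈ S, ∀ b ∈ S, a + b ∈ S) ∧ Sᶜ.Finite

/-- `⟨A⟩`: the additive submonoid of `ℕ` generated by `A`, viewed as a set. -/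
def gen (A : Set ℕ) : Set ℕ := (AddSubmonoid.closure A : Set ℕ)

/-- The multiplicity `m(S)`: the least nonzero element of `S`. -/
noncomputable def nsMult (S : Set ℕ) : ℕ := sInf {x | x ∈ S ∧ x ≠ 0}

/-- The minimal system of generators of `S`: the nonzero elements of `S` that are
not a sum of two nonzero elements of `S`. -/
def msg (S : Set ℕ) : Set ℕ :=
  {x | x ∈ S ∧ x ≠ 0 ∧ ∀ a ∈ S, a ≠ 0 → ∀ b ∈ S, b ≠ 0 → x ≠ a + b}

/-- The ratio `r(S)`: the second smallest minimal generator of `S`. -/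
noncomputable def nsRatio (S : Set ℕ) : ℕ := sInf (msg S \ {nsMult S})

/-- The maximum minimal generator `M(S)`. -/
noncomputable def nsMaxGen (S : Set ℕ) : ℕ := sSup (msg S)

/-- The Apéry set `Ap(S, n) = {s ∈ S : s - n ∉ S}`. -/
def AperySet (S : Set ℕ) (n : ℕ) : Set ℕ :=
  {s | s ∈ S ∧ ¬ ∃ y ∈ S, y + n = s}

/-- `w(i)`: the least element of `S` congruent to `i` modulo `n`. -/
noncomputable def aperyW (S : Set ℕ) (n i : ℕ) : ℕ :=
  sInf {s | s ∈ S ∧ s % n = i % n}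

/-- A MANS-semigroup: a numerical semigroup whose Apéry set with respect to the
multiplicity is monotone, i.e. `w(1) < w(2) < ⋯ < w(m(S) - 1)`. -/
def IsMANS (S : Set ℕ) : Prop :=
  IsNumSgp S ∧ ∀ i : ℕ, 0 < i → i + 1 < nsMult S →
    aperyW S (nsMult S) i < aperyW S (nsMult S) (i + 1)

/-- The Frobenius number `F(S)`: the greatest integer not in `S`. -/
noncomputable def nsFrob (S : Set ℕ) : ℕ := sSup {x | x ∉ S}

/-- The genus `g(S)`: the number of gaps of `S`. -/
noncomputable def nsGenus (S : Set ℕ) : ℕ := Set.ncard {x | x ∉ S}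

/-- The set of pseudo-Frobenius numbers of `S`: integers `x ∉ S` such that
`x + s ∈ S` for every nonzero `s ∈ S`. -/
def nsPF (S : Set ℕ) : Set ℤ :=
  {x : ℤ | x ∉ ((Nat.cast : ℕ → ℤ) '' S) ∧
    ∀ s ∈ S, s ≠ 0 → x + (s : ℤ) ∈ ((Nat.cast : ℕ → ℤ) '' S)}

/-- The type `t(S)`: the number of pseudo-Frobenius numbers of `S`. -/
noncomputable def nsType (S : Set ℕ) : ℕ := (nsPF S).ncard

/-- `S` is pseudo-symmetric iff `F(S) = 2 g(S) - 2`. -/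
def IsPseudoSymmetric (S : Set ℕ) : Prop :=
  (nsFrob S : ℤ) = 2 * (nsGenus S : ℤ) - 2

/-!
Put `A = a * m + 1` and `B = b * m + t`, and let `w v` be the cost of `v` when its last base-`t`
digit is paid in units of `A` and the rest, `v / t`, in units of `B`. The bounds on `B` make `w`
strictly increasing and subadditive, and `w v ≡ v` modulo `m`, so the Apéry set with respect to `m`
is `{w 0, …, w (m - 1)}`. Moreover `w (i + k) = w i + w k` exactly when adding `i` and `k` produces
no carry out of the last digit. Pseudo-Frobenius numbers correspond to the Apéry elements `w i` that
are maximal for the order `x ≤ y ↔ y - x ∈ S`, i.e. those for which every `i + k < m` with `k > 0`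
carries. This leaves only `i = m - 1` and `i = t * (m / t) - 1`, which coincide iff `t ∣ m`.
-/

theorem ncard_pair_eq_one_iff {α : Type*} {x y : α} : ({x, y} : Set α).ncard = 1 ↔ x = y := by
  refine ⟨fun h ↦ ?_, by rintro rfl; simp⟩
  by_contra hne
  simp [Set.ncard_pair hne] at h

theorem forall_le_mod_add_mod_iff {m t i : ℕ} (ht : 0 < t) (htm : t ≤ m) (hi : i < m) :
    (∀ k, 0 < k → i + k < m → t ≤ i % t + k % t) ↔ i = m - 1 ∨ i = t * (m / t) - 1 := by
  constructor
  · intro hcarry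
    -- `k = 1` forces the last digit of `i` to be `t - 1`, and `k = t` forces `m ≤ i + t`.
    refine or_iff_not_imp_left.2 fun him ↦ ?_
    have hlast : i % t = t - 1 := by
      have h1 := hcarry 1 one_pos (by omega)
      have h2 := Nat.mod_le 1 t
      have h3 := Nat.mod_lt i ht
      omega
    have hnear : m ≤ i + t := by
      by_contra! hlt
      have := hcarry t ht hlt
      rw [Nat.mod_self] at this
      omega
    have hsucc : i + 1 = t * (i / t + 1) := by
      have := Nat.mod_add_div i t
      rw [mul_add]
      omega
    have hdiv : m / t = i / t + 1 :=
      Nat.div_eq_of_lt_le (by linarith) (by linarith)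
    rw [hdiv, ← hsucc, Nat.add_sub_cancel]
  · rintro (rfl | rfl) k hk hik
    · omega
    · obtain ⟨q, hq⟩ := Nat.exists_eq_succ_of_ne_zero (Nat.div_pos htm ht).ne'
      have hdiv := Nat.mod_add_div m t
      have hmod := Nat.mod_lt m ht
      have hlast : t * (m / t) - 1 = (t - 1) + t * q := by
        rw [hq, Nat.mul_succ]
        omega
      have hkt : k < t := by omega
      rw [hlast, Nat.add_mul_mod_self_left, Nat.mod_eq_of_lt (by omega), Nat.mod_eq_of_lt hkt]
      omega

/-- The elements of `Ap(S, n)` that are maximal for the order `x ≤ y ↔ y - x ∈ S`; they determine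
the pseudo-Frobenius numbers of `S`. Maximality is stated without subtraction: no nonzero element of
`S` can be added without leaving the Apéry set. -/
def aperyMaximal (S : Set ℕ) (n : ℕ) : Set ℕ :=
  {w | w ∈ AperySet S n ∧ ∀ s ∈ S, s ≠ 0 → w + s ∉ AperySet S n}

theorem nsPF_eq_image_aperyMaximal {M : AddSubmonoid ℕ} {n : ℕ} (hn : n ∈ M) (hn0 : n ≠ 0) :
    nsPF M = (fun w : ℕ ↦ (w : ℤ) - n) '' aperyMaximal M n := by
  ext x
  constructor
  · rintro ⟨hx, hadd⟩
    obtain ⟨w, hw, hwx⟩ := hadd n hn hn0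
    refine ⟨w, ⟨⟨hw, ?_⟩, ?_⟩, by simp only [hwx, add_sub_cancel_right]⟩
    · rintro ⟨y, hy, rfl⟩
      exact hx ⟨y, hy, by push_cast at hwx; linarith⟩
    · rintro s hs hs0 ⟨-, hws⟩
      obtain ⟨y, hy, hyx⟩ := hadd s hs hs0
      exact hws ⟨y, hy, by zify; linarith⟩
  · rintro ⟨w, ⟨⟨hw, hwn⟩, hmax⟩, rfl⟩
    refine ⟨?_, fun s hs hs0 ↦ ?_⟩
    · rintro ⟨y, hy, hyw⟩
      exact hwn ⟨y, hy, by zify; linarith⟩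
    · obtain ⟨y, hy, hyw⟩ : ∃ y ∈ (M : Set ℕ), y + n = w + s := by
        by_contra hne
        exact hmax s hs hs0 ⟨M.add_mem hw hs, hne⟩
      exact ⟨y, hy, by zify at hyw; linarith⟩

theorem mem_gen_triple {x y z s : ℕ} :
    s ∈ gen {x, y, z} ↔ ∃ a b c : ℕ, a * x + b * y + c * z = s := by
  rw [gen, SetLike.mem_coe, ← Submodule.span_nat_eq_addSubmonoidClosure]
  exact Submodule.mem_span_triple

section DigitWeight

/-- The weight `w v` of `v` when its last base-`t` digit counts `A` per unit and the remaining part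
`v / t` counts `B` per unit. For `A ≡ 1` and `B ≡ t` modulo `m` these are the candidates for the
Apéry elements of `⟨m, A, B⟩`. -/
def digitWeight (t A B v : ℕ) : ℕ := v % t * A + v / t * B

variable {t A B : ℕ}

theorem digitWeight_add_mul {c : ℕ} (hc : c < t) (d : ℕ) :
    digitWeight t A B (c + t * d) = c * A + d * B := by
  rw [digitWeight, Nat.add_mul_mod_self_left, Nat.mod_eq_of_lt hc,
    Nat.add_mul_div_left _ _ (Nat.zero_lt_of_lt hc), Nat.div_eq_of_lt hc, zero_add]

theorem digitWeight_strictMono (ht : 0 < t) (hA : 0 < A) (hlo : (t - 1) * A < B) :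
    StrictMono (digitWeight t A B) := by
  refine strictMono_nat_of_lt_succ fun v ↦ ?_
  obtain hlt | hcarry : v % t + 1 < t ∨ v % t = t - 1 := by
    have := Nat.mod_lt v ht
    omega
  · have hsucc : v + 1 = (v % t + 1) + t * (v / t) := by
      linarith [Nat.mod_add_div v t]
    rw [hsucc, digitWeight_add_mul hlt, digitWeight]
    linarith
  · have hsucc : v + 1 = 0 + t * (v / t + 1) := by
      have := Nat.mod_add_div v t
      rw [mul_add]
      omega
    rw [hsucc, digitWeight_add_mul ht, digitWeight, hcarry]
    linarith

theorem digitWeight_add_of_mod_add_mod_lt {i k : ℕ} (h : i % t + k % t < t) :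
    digitWeight t A B (i + k) = digitWeight t A B i + digitWeight t A B k := by
  rw [digitWeight, Nat.add_mod_of_add_mod_lt h, Nat.add_div_eq_of_add_mod_lt h, digitWeight,
    digitWeight]
  ring

theorem digitWeight_add_lt_of_le_mod_add_mod {i k : ℕ} (hhi : B < t * A)
    (h : t ≤ i % t + k % t) :
    digitWeight t A B (i + k) < digitWeight t A B i + digitWeight t A B k := by
  have ht : 0 < t := Nat.pos_of_lt_mul_right hhi
  have hmod : (i + k) % t * A + t * A = (i % t + k % t) * A := by
    rw [← Nat.add_mod_add_of_le_add_mod h, add_mul]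
  simp only [digitWeight, Nat.add_div_eq_of_le_mod_add_mod h ht]
  linarith

theorem digitWeight_add_mul_le (hhi : B ≤ t * A) (x y : ℕ) :
    digitWeight t A B (x + t * y) ≤ x * A + y * B := by
  obtain rfl | ht := t.eq_zero_or_pos
  · simp [digitWeight]
  calc digitWeight t A B (x + t * y) = x % t * A + x / t * B + y * B := by
        rw [digitWeight, Nat.add_mul_mod_self_left, Nat.add_mul_div_left _ _ ht]
        ring
    _ ≤ x % t * A + x / t * (t * A) + y * B := by gcongr
    _ = (x % t + t * (x / t)) * A + y * B := by ring
    _ = x * A + y * B := by rw [Nat.mod_add_div]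

theorem digitWeight_modEq {m : ℕ} (hA : A ≡ 1 [MOD m]) (hB : B ≡ t [MOD m]) (v : ℕ) :
    digitWeight t A B v ≡ v [MOD m] :=
  calc v % t * A + v / t * B ≡ v % t * 1 + v / t * t [MOD m] :=
        (hA.mul_left _).add (hB.mul_left _)
    _ = v := by rw [mul_one, Nat.mod_add_div']

theorem digitWeight_mod_modEq {m : ℕ} (hA : A ≡ 1 [MOD m]) (hB : B ≡ t [MOD m]) (v : ℕ) :
    digitWeight t A B (v % m) ≡ v [MOD m] :=
  (digitWeight_modEq hA hB _).trans (Nat.mod_modEq v m)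

end DigitWeight

section Apery

variable {m t A B : ℕ}

theorem mem_gen_iff_digitWeight_mod_le (hA : A ≡ 1 [MOD m]) (hB : B ≡ t [MOD m])
    (hlo : (t - 1) * A < B) (hhi : B < t * A) {s : ℕ} :
    s ∈ gen {m, A, B} ↔ digitWeight t A B (s % m) ≤ s := by
  constructor
  · intro hs
    obtain ⟨z, x, y, rfl⟩ := mem_gen_triple.1 hs
    have hmod : z * m + x * A + y * B ≡ x + t * y [MOD m] :=
      calc z * m + x * A + y * B ≡ 0 + x * 1 + y * t [MOD m] :=
            ((Nat.modEq_zero_iff_dvd.2 ⟨z, mul_comm z m⟩).add (hA.mul_left x)).add (hB.mul_left y)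
        _ = x + t * y := by ring
    have hmono := digitWeight_strictMono (Nat.pos_of_lt_mul_right hhi)
      (Nat.pos_of_lt_mul_left hhi) hlo
    calc digitWeight t A B ((z * m + x * A + y * B) % m)
        = digitWeight t A B ((x + t * y) % m) := by rw [hmod]
      _ ≤ digitWeight t A B (x + t * y) := hmono.monotone (Nat.mod_le _ _)
      _ ≤ x * A + y * B := digitWeight_add_mul_le hhi.le x y
      _ ≤ z * m + x * A + y * B := by omega
  · intro hle
    obtain ⟨z, hz⟩ := (Nat.modEq_iff_dvd' hle).1 (digitWeight_mod_modEq hA hB s)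
    refine mem_gen_triple.2 ⟨z, s % m % t, s % m / t, ?_⟩
    rw [digitWeight] at hle hz
    rw [mul_comm z m, ← hz]
    omega

theorem mem_aperySet_gen_iff (hm : 0 < m) (hA : A ≡ 1 [MOD m]) (hB : B ≡ t [MOD m])
    (hlo : (t - 1) * A < B) (hhi : B < t * A) {s : ℕ} :
    s ∈ AperySet (gen {m, A, B}) m ↔ digitWeight t A B (s % m) = s := by
  have hmem {s : ℕ} := mem_gen_iff_digitWeight_mod_le hA hB hlo hhi (s := s)
  constructor
  · rintro ⟨hs, hmin⟩
    refine (hmem.1 hs).eq_of_not_lt fun hlt ↦ hmin ?_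
    have hgap : digitWeight t A B (s % m) + m ≤ s :=
      (digitWeight_mod_modEq hA hB s).add_le_of_lt hlt
    refine ⟨s - m, hmem.2 ?_, by omega⟩
    rw [← Nat.mod_eq_sub_mod (by omega)]
    omega
  · refine fun hs ↦ ⟨hmem.2 hs.le, ?_⟩
    rintro ⟨y, hy, rfl⟩
    have hle := hmem.1 hy
    rw [Nat.add_mod_right] at hs
    omega

theorem digitWeight_mem_aperySet (hA : A ≡ 1 [MOD m]) (hB : B ≡ t [MOD m])
    (hlo : (t - 1) * A < B) (hhi : B < t * A) {i : ℕ} (hi : i < m) :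
    digitWeight t A B i ∈ AperySet (gen {m, A, B}) m := by
  rw [mem_aperySet_gen_iff (Nat.zero_lt_of_lt hi) hA hB hlo hhi, digitWeight_modEq hA hB i,
    Nat.mod_eq_of_lt hi]

theorem digitWeight_mem_aperyMaximal_iff (hA : A ≡ 1 [MOD m]) (hB : B ≡ t [MOD m])
    (hlo : (t - 1) * A < B) (hhi : B < t * A) {i : ℕ} (hi : i < m) :
    digitWeight t A B i ∈ aperyMaximal (gen {m, A, B}) m ↔
      ∀ k, 0 < k → i + k < m → t ≤ i % t + k % t := by
  have hmono := digitWeight_strictMono (Nat.pos_of_lt_mul_right hhi)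
    (Nat.pos_of_lt_mul_left hhi) hlo
  have hapery {j : ℕ} := digitWeight_mem_aperySet hA hB hlo hhi (i := j)
  constructor
  · rintro ⟨-, hmax⟩ k hk hik
    by_contra! hlt
    refine hmax _ (hapery (by omega : k < m)).1 (Nat.ne_zero_of_lt (hmono hk)) ?_
    rw [← digitWeight_add_of_mod_add_mod_lt hlt]
    exact hapery hik
  · refine fun hcarry ↦ ⟨hapery hi, fun s hs hs0 hws ↦ ?_⟩
    have hj := (mem_aperySet_gen_iff (Nat.zero_lt_of_lt hi) hA hB hlo hhi).1 hws
    set j := (digitWeight t A B i + s) % m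
    have hjm : j < m := Nat.mod_lt _ (Nat.zero_lt_of_lt hi)
    have hij : i < j := hmono.lt_iff_lt.1 (by omega)
    obtain ⟨k, hk⟩ := Nat.exists_eq_add_of_le hij.le
    have hsk : s % m = k := by
      have hmod : i + s ≡ i + k [MOD m] :=
        calc i + s ≡ digitWeight t A B i + s [MOD m] :=
              (digitWeight_modEq hA hB i).symm.add_right s
          _ ≡ j [MOD m] := (Nat.mod_modEq _ m).symm
          _ = i + k := hk
      exact Nat.mod_eq_of_modEq (Nat.ModEq.add_left_cancel' i hmod) (by omega)
    have hks : digitWeight t A B k ≤ s := by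
      simpa only [hsk] using (mem_gen_iff_digitWeight_mod_le hA hB hlo hhi).1 hs
    have hlt := digitWeight_add_lt_of_le_mod_add_mod hhi (hcarry k (by omega) (by omega))
    rw [← hk] at hlt
    omega

theorem aperyMaximal_gen (hA : A ≡ 1 [MOD m]) (hB : B ≡ t [MOD m])
    (hlo : (t - 1) * A < B) (hhi : B < t * A) (htm : t ≤ m) :
    aperyMaximal (gen {m, A, B}) m =
      {digitWeight t A B (m - 1), digitWeight t A B (t * (m / t) - 1)} := by
  have ht : 0 < t := Nat.pos_of_lt_mul_right hhi
  have hm : 0 < m := ht.trans_le htm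
  have hiff {i : ℕ} (hi : i < m) :=
    (digitWeight_mem_aperyMaximal_iff hA hB hlo hhi hi).trans (forall_le_mod_add_mod_iff ht htm hi)
  ext w
  constructor
  · intro hw
    have hwi := (mem_aperySet_gen_iff hm hA hB hlo hhi).1 hw.1
    rw [← hwi] at hw ⊢
    exact ((hiff (Nat.mod_lt w hm)).1 hw).imp (congrArg _) (congrArg _)
  · rintro (rfl | rfl)
    · exact (hiff (by omega)).2 (Or.inl rfl)
    · have := Nat.mul_div_le m t
      exact (hiff (by omega)).2 (Or.inr rfl)

theorem nsPF_gen (hA : A ≡ 1 [MOD m]) (hB : B ≡ t [MOD m])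
    (hlo : (t - 1) * A < B) (hhi : B < t * A) (htm : t ≤ m) :
    nsPF (gen {m, A, B}) =
      {(digitWeight t A B (m - 1) : ℤ) - m, (digitWeight t A B (t * (m / t) - 1) : ℤ) - m} := by
  have hm : m ≠ 0 := ((Nat.pos_of_lt_mul_right hhi).trans_le htm).ne'
  have hmem : m ∈ AddSubmonoid.closure {m, A, B} := AddSubmonoid.subset_closure (by simp)
  rw [gen, nsPF_eq_image_aperyMaximal hmem hm, ← gen, aperyMaximal_gen hA hB hlo hhi htm,
    Set.image_pair]

end Apery

theorem stmt13 (m a b t : ℕ) (hm : 3 ≤ m) (ha : 1 ≤ a) (ht2 : 2 ≤ t) (htm : t ≤ m - 1)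
    (h1 : (t - 1) * (a * m + 1) < b * m + t) (h2 : b * m + t < t * (a * m + 1)) :
    nsType (gen {m, a * m + 1, b * m + t}) = 1 ↔ t ∣ m := by
  have hA : a * m + 1 ≡ 1 [MOD m] := by simp [Nat.ModEq]
  have hB : b * m + t ≡ t [MOD m] := by simp [Nat.ModEq]
  have hinj := (digitWeight_strictMono (by omega) (Nat.succ_pos _) h1).injective
  have hpos : 0 < t * (m / t) := Nat.mul_pos (by omega) (Nat.div_pos (by omega) (by omega))
  rw [nsType, nsPF_gen hA hB h1 h2 (by omega), ncard_pair_eq_one_iff, sub_left_inj, Nat.cast_inj,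
    hinj.eq_iff, ← Nat.mul_div_eq_iff_dvd]
  omega
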